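/- Let m ≡ 5 (mod 6) with m ≥ 5 and n = 2^m − 1. For i ∈ {0,1,2}, define T_i = { 1 ≤ j ≤ n−1 : w₂(j) ≡ i (mod 3) }. Then |T_0| = |T_1| = |T_2| = (2^m − 2)/3. -/

import Mathlib

def w2 (x : ℕ) : ℕ := (Nat.digits 2 x).sum

lemma w2_even (j : ℕ) : w2 (2 * j) = w2 j := by
  rcases Nat.eq_zero_or_pos j with h | h
  · subst h; rfl
  · unfold w2
    rw [Nat.digits_def' (by norm_num) (by omega)]
    simp

lemma w2_odd (j : ℕ) : w2 (2 * j + 1) = w2 j + 1 := by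
  unfold w2
  rw [Nat.digits_def' (by norm_num) (by omega)]
  have h1 : (2 * j + 1) % 2 = 1 := by omega
  have h2 : (2 * j + 1) / 2 = j := by omega
  rw [h1, h2, List.sum_cons, add_comm]

lemma w2_full (m : ℕ) : w2 (2 ^ m - 1) = m := by
  induction m with
  | zero => simp [w2]
  | succ k ih =>
    have hp : 0 < 2 ^ k := by positivity
    have : 2 ^ (k + 1) - 1 = 2 * (2 ^ k - 1) + 1 := by rw [pow_succ]; omega
    rw [this, w2_odd, ih]

def cnt (N i : ℕ) : ℕ := ∑ j ∈ Finset.range N, if w2 j % 3 = i then 1 else 0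

lemma cnt_double (N : ℕ) :
    cnt (2 * N) 0 = cnt N 0 + cnt N 2 ∧ cnt (2 * N) 1 = cnt N 1 + cnt N 0 ∧
    cnt (2 * N) 2 = cnt N 2 + cnt N 1 := by
  induction N with
  | zero => simp [cnt]
  | succ k ih =>
    have e : 2 * (k + 1) = 2 * k + 1 + 1 := by ring
    unfold cnt at *
    rw [e]
    simp only [Finset.sum_range_succ, w2_even, w2_odd]
    have := Nat.mod_lt (w2 k) (show 3 > 0 by norm_num)
    obtain ⟨h0, h1, h2⟩ := ih
    rw [h0, h1, h2]
    refine ⟨?_, ?_, ?_⟩ <;> split_ifs <;> omega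

lemma cnt_pow (m : ℕ) :
    cnt (2 ^ (m + 1)) 0 = cnt (2 ^ m) 0 + cnt (2 ^ m) 2 ∧
    cnt (2 ^ (m + 1)) 1 = cnt (2 ^ m) 1 + cnt (2 ^ m) 0 ∧
    cnt (2 ^ (m + 1)) 2 = cnt (2 ^ m) 2 + cnt (2 ^ m) 1 := by
  rw [pow_succ, mul_comm]; exact cnt_double _

lemma cnt_main (k : ℕ) :
    3 * cnt (2 ^ (6 * k + 5)) 1 + 2 = 2 ^ (6 * k + 5) ∧
    cnt (2 ^ (6 * k + 5)) 0 = cnt (2 ^ (6 * k + 5)) 1 + 1 ∧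
    cnt (2 ^ (6 * k + 5)) 2 = cnt (2 ^ (6 * k + 5)) 1 + 1 := by
  induction k with
  | zero =>
    have b0 : cnt (2 ^ 0) 0 = 1 := by simp [cnt, w2]
    have b1 : cnt (2 ^ 0) 1 = 0 := by simp [cnt, w2]
    have b2 : cnt (2 ^ 0) 2 = 0 := by simp [cnt, w2]
    have h0 := cnt_pow 0
    have h1 := cnt_pow 1
    have h2 := cnt_pow 2
    have h3 := cnt_pow 3
    have h4 := cnt_pow 4
    norm_num at *
    omega
  | succ k ih =>
    have h0 := cnt_pow (6 * k + 5)
    have h1 := cnt_pow (6 * k + 5 + 1)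
    have h2 := cnt_pow (6 * k + 5 + 1 + 1)
    have h3 := cnt_pow (6 * k + 5 + 1 + 1 + 1)
    have h4 := cnt_pow (6 * k + 5 + 1 + 1 + 1 + 1)
    have h5 := cnt_pow (6 * k + 5 + 1 + 1 + 1 + 1 + 1)
    have e : 6 * (k + 1) + 5 = 6 * k + 5 + 1 + 1 + 1 + 1 + 1 + 1 := by ring
    have e2 : 2 ^ (6 * k + 5 + 1 + 1 + 1 + 1 + 1 + 1) = 64 * 2 ^ (6 * k + 5) := by ring
    rw [e]
    generalize cnt (2 ^ (6 * k + 5 + 1 + 1 + 1 + 1 + 1 + 1)) = c6 at *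
    generalize cnt (2 ^ (6 * k + 5 + 1 + 1 + 1 + 1 + 1)) = c5 at *
    generalize cnt (2 ^ (6 * k + 5 + 1 + 1 + 1 + 1)) = c4 at *
    generalize cnt (2 ^ (6 * k + 5 + 1 + 1 + 1)) = c3 at *
    generalize cnt (2 ^ (6 * k + 5 + 1 + 1)) = c2 at *
    generalize cnt (2 ^ (6 * k + 5 + 1)) = c1 at *
    generalize cnt (2 ^ (6 * k + 5)) = c0 at *
    rw [e2]
    generalize 2 ^ (6 * k + 5) = P at *
    omega

lemma cnt_split (n i : ℕ) (hn : 2 ≤ n) :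
    cnt (n + 1) i = (if 0 = i then 1 else 0) +
      ((Finset.Icc 1 (n - 1)).filter (fun j => w2 j % 3 = i)).card +
      (if w2 n % 3 = i then 1 else 0) := by
  have e : Finset.Icc 1 (n - 1) = Finset.Ico 1 n := by
    ext x; simp only [Finset.mem_Icc, Finset.mem_Ico]; omega
  rw [e, Finset.card_filter, cnt, Finset.sum_range_succ, Finset.range_eq_Ico,
    Finset.sum_eq_sum_Ico_succ_bot (by omega)]
  have : w2 0 = 0 := by simp [w2]
  simp [this]

theorem stmt12 (m : ℕ) (hm : m % 6 = 5) (hm5 : 5 ≤ m) (n : ℕ) (hn : n = 2 ^ m - 1) :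
    let T : ℕ → Finset ℕ := fun i => (Finset.Icc 1 (n - 1)).filter (fun j => w2 j % 3 = i)
    (T 0).card = (2 ^ m - 2) / 3 ∧ (T 1).card = (2 ^ m - 2) / 3 ∧
    (T 2).card = (2 ^ m - 2) / 3 := by
  intro T
  have hp : 2 ^ 5 ≤ 2 ^ m := Nat.pow_le_pow_right (by norm_num) hm5
  have hw : w2 n % 3 = 2 := by rw [hn, w2_full]; omega
  have hn2 : 2 ≤ n := by omega
  have hN : n + 1 = 2 ^ m := by omega
  have s0 := cnt_split n 0 hn2
  have s1 := cnt_split n 1 hn2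
  have s2 := cnt_split n 2 hn2
  have hk := cnt_main (m / 6)
  have hmk : 6 * (m / 6) + 5 = m := by omega
  rw [hmk] at hk
  rw [hN, hw] at s0 s1 s2
  norm_num at s0 s1 s2
  simp only [T]
  omega
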